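/- Let G = (𝒩, w) be an integer octagonal graph. If there exists a tightly closed integer octagonal graph w′ with w′ ⊴ w, then G is ℤ-consistent: there exists a valuation ρ : 𝒩 → ℤ such that ρ(ī) = −ρ(i) for all i ∈ 𝒩 and ρ(i) − ρ(j) ≤ w(i,j) for all i, j ∈ 𝒩 with w(i,j) < +∞. -/

import Mathlib

/-- Extended rationals: ℚ ∪ {+∞}. -/
abbrev Qinf := WithTop ℚ

/-- Weight of a path (list of nodes): sum of the weights of its arcs. -/
def pathWeight {N : Type*} (w : N → N → Qinf) : List N → Qinf
  | [] => 0
  | [_] => 0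
  | a :: b :: l => w a b + pathWeight w (b :: l)

/-- A proper cycle: at least two arcs, first node equals last node,
    consecutive nodes distinct. -/
def IsProperCycle {N : Type*} (l : List N) : Prop :=
  3 ≤ l.length ∧ l.head? = l.getLast? ∧ l.Chain' (· ≠ ·)

/-- A graph is consistent if it has no proper cycle of negative weight. -/
def Consistent {N : Type*} (w : N → N → Qinf) : Prop :=
  ∀ l : List N, IsProperCycle l → 0 ≤ pathWeight w l

/-- A consistent graph is closed if self-loops have weight 0 and the
    triangle inequality holds. -/
def ClosedG {N : Type*} (w : N → N → Qinf) : Prop :=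
  Consistent w ∧ (∀ i, w i i = 0) ∧ ∀ i j k, w i j ≤ w i k + w k j

/-- The "bar" involution on nodes: ī = i+1 for even i, ī = i-1 for odd i. -/
def bar {n : ℕ} (i : Fin (2 * n)) : Fin (2 * n) :=
  if _h : i.val % 2 = 0 then ⟨i.val + 1, by have := i.isLt; omega⟩
  else ⟨i.val - 1, by have := i.isLt; omega⟩

/-- Coherence: w(i,j) = w(j̄,ī). -/
def Coherent {n : ℕ} (w : Fin (2 * n) → Fin (2 * n) → Qinf) : Prop :=
  ∀ i j, w i j = w (bar j) (bar i)

/-- An octagonal graph: consistent and coherent. -/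
def Octagonal {n : ℕ} (w : Fin (2 * n) → Fin (2 * n) → Qinf) : Prop :=
  Consistent w ∧ Coherent w

/-- Pointwise order on graphs. -/
def GLe {n : ℕ} (w₁ w₂ : Fin (2 * n) → Fin (2 * n) → Qinf) : Prop :=
  ∀ i j, w₁ i j ≤ w₂ i j

/-- Halving on ℚ∞ (with +∞/2 = +∞). -/
def half (x : Qinf) : Qinf := x.map (fun q => q / 2)

/-- Floored halving on ℚ∞ (with ⌊+∞/2⌋ = +∞). -/
def fhalf (x : Qinf) : Qinf := x.map (fun q => ((⌊q / 2⌋ : ℤ) : ℚ))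

/-- Integer weights: every weight is an integer or +∞. -/
def IntWeights {n : ℕ} (w : Fin (2 * n) → Fin (2 * n) → Qinf) : Prop :=
  ∀ i j, w i j = ⊤ ∨ ∃ d : ℤ, w i j = ((d : ℚ) : Qinf)

/-- A strongly closed octagonal graph. -/
def StronglyClosed {n : ℕ} (w : Fin (2 * n) → Fin (2 * n) → Qinf) : Prop :=
  Octagonal w ∧ ClosedG w ∧ ∀ i j, 2 * w i j ≤ w i (bar i) + w (bar j) j

/-- A tightly closed integer octagonal graph. -/
def TightlyClosed {n : ℕ} (w : Fin (2 * n) → Fin (2 * n) → Qinf) : Prop :=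
  IntWeights w ∧ StronglyClosed w ∧
    ∀ i, w i (bar i) = ⊤ ∨ ∃ d : ℤ, w i (bar i) = (((2 * d : ℤ) : ℚ) : Qinf)

theorem my_bar_bar {n : ℕ} (i : Fin (2 * n)) : bar (bar i) = i := by
  have key : ∀ j : Fin (2 * n), (bar j).val = if j.val % 2 = 0 then j.val + 1 else j.val - 1 := by
    intro j
    unfold bar
    split_ifs <;> rfl
  ext
  rw [key, key]
  split_ifs <;> omega

theorem my_bar_ne {n : ℕ} (i : Fin (2 * n)) : bar i ≠ i := by
  unfold bar
  intro h
  have := congrArg Fin.val h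
  split_ifs at this <;> simp at this
  omega

theorem my_between (L U : Set ℤ) (hL : L.Finite) (hU : U.Finite)
    (h : ∀ l ∈ L, ∀ u ∈ U, l ≤ u) :
    ∃ x : ℤ, (∀ l ∈ L, l ≤ x) ∧ ∀ u ∈ U, x ≤ u := by
  by_cases hne : L.Nonempty
  · exact ⟨sSup L, fun l hl => le_csSup hL.bddAbove hl,
      fun u hu => csSup_le hne (fun l hl => h l hl u hu)⟩
  · obtain ⟨x, hx⟩ := hU.bddBelow
    exact ⟨x, fun l hl => (hne ⟨l, hl⟩).elim, fun u hu => hx hu⟩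

theorem my_extend {n : ℕ} (T : Fin (2 * n) → Fin (2 * n) → Prop)
    (f : Fin (2 * n) → Fin (2 * n) → ℤ)
    (tri : ∀ i k j, T i k → T k j → T i j ∧ f i j ≤ f i k + f k j)
    (coh : ∀ i j, T i j → T (bar j) (bar i) ∧ f (bar j) (bar i) = f i j)
    (even : ∀ i, T i (bar i) → ∃ d, f i (bar i) = 2 * d)
    (diag : ∀ i, T i i → 0 ≤ f i i) (S : Finset (Fin (2 * n))) :
    ∃ ρ : Fin (2 * n) → ℤ, (∀ i, ρ (bar i) = -ρ i) ∧
      ∀ i j, (i ∈ S ∨ bar i ∈ S) → (j ∈ S ∨ bar j ∈ S) → T i j → ρ i - ρ j ≤ f i j := by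
  classical
  induction S using Finset.induction_on with
  | empty => exact ⟨fun _ => 0, by simp, by simp⟩
  | insert k S hk ih =>
    obtain ⟨ρ, hρ, h⟩ := ih
    by_cases hbk : bar k ∈ S
    · refine ⟨ρ, hρ, fun i j hi hj => h i j ?_ ?_⟩
      · simp only [Finset.mem_insert] at hi
        rcases hi with (rfl | hi) | (hi | hi)
        · exact .inr hbk
        · exact .inl hi
        · subst hi; rw [my_bar_bar] at hbk; exact .inl hbk
        · exact .inr hi
      · simp only [Finset.mem_insert] at hj
        rcases hj with (rfl | hj) | (hj | hj)
        · exact .inr hbk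
        · exact .inl hj
        · subst hj; rw [my_bar_bar] at hbk; exact .inl hbk
        · exact .inr hj
    set A : Fin (2 * n) → Prop := fun i => i ∈ S ∨ bar i ∈ S with hA
    have hAb : ∀ i, A i → A (bar i) := by
      intro i hi
      simp only [hA, my_bar_bar] at hi ⊢
      exact hi.symm
    have hbb := my_bar_bar (n := n)
    obtain ⟨x, hxL, hxU⟩ := my_between
      ({l | ∃ j, A j ∧ T j k ∧ l = ρ j - f j k} ∪ {l | T (bar k) k ∧ f (bar k) k = -2 * l})
      ({l | ∃ j, A j ∧ T k j ∧ l = ρ j + f k j} ∪ {l | T k (bar k) ∧ f k (bar k) = 2 * l})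
      (by
        refine Set.Finite.union ((Set.finite_range fun j => ρ j - f j k).subset ?_)
          ((Set.finite_singleton (-(f (bar k) k / 2))).subset ?_)
        · rintro l ⟨j, -, -, rfl⟩; exact ⟨j, rfl⟩
        · rintro l ⟨-, h⟩; simp; omega)
      (by
        refine Set.Finite.union ((Set.finite_range fun j => ρ j + f k j).subset ?_)
          ((Set.finite_singleton (f k (bar k) / 2)).subset ?_)
        · rintro l ⟨j, -, -, rfl⟩; exact ⟨j, rfl⟩
        · rintro l ⟨-, h⟩; simp; omega)
      (by
        rintro l (⟨i, hi, hT, rfl⟩ | ⟨hT, hl⟩) u (⟨j, hj, hT', rfl⟩ | ⟨hT', hu⟩)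
        · have t := tri _ _ _ hT hT'
          have := h i j hi hj t.1
          omega
        · have c := coh _ _ hT
          have t := tri _ _ _ hT hT'
          have t2 := tri _ _ _ t.1 c.1
          have := h i _ hi (hAb _ hi) t2.1
          have := hρ i
          omega
        · have c := coh _ _ hT'
          have t := tri _ _ _ hT hT'
          have t2 := tri _ _ _ c.1 t.1
          have := h _ j (hAb _ hj) hj t2.1
          have := hρ j
          omega
        · have t := tri _ _ _ hT hT'
          have t2 := tri _ _ _ hT' hT
          have := diag _ t2.1
          omega)
    have e1 : ∀ j, A j → T j k → ρ j - x ≤ f j k := fun j hj hT => by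
      have := hxL _ (.inl ⟨j, hj, hT, rfl⟩)
      omega
    have e2 : ∀ j, A j → T k j → x - ρ j ≤ f k j := fun j hj hT => by
      have := hxU _ (.inl ⟨j, hj, hT, rfl⟩)
      omega
    have e3 : T k (bar k) → x - -x ≤ f k (bar k) := fun hT => by
      obtain ⟨d, hd⟩ := even k hT
      have := hxU d (.inr ⟨hT, hd⟩)
      omega
    have e4 : T (bar k) k → -x - x ≤ f (bar k) k := fun hT => by
      obtain ⟨d, hd⟩ := even (bar k) (by rwa [hbb])
      rw [hbb] at hd
      have := hxL (-d) (.inr ⟨hT, by omega⟩)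
      omega
    have e5 : ∀ j, A j → T j (bar k) → ρ j - -x ≤ f j (bar k) := fun j hj hT => by
      have c := coh _ _ hT
      rw [hbb] at c
      have := e2 _ (hAb _ hj) c.1
      have := hρ j
      omega
    have e6 : ∀ j, A j → T (bar k) j → -x - ρ j ≤ f (bar k) j := fun j hj hT => by
      have c := coh _ _ hT
      rw [hbb] at c
      have := e1 _ (hAb _ hj) c.1
      have := hρ j
      omega
    have hkn := my_bar_ne k
    have hcase : ∀ i, (i ∈ insert k S ∨ bar i ∈ insert k S) →
        i = k ∨ i = bar k ∨ (i ≠ k ∧ i ≠ bar k ∧ A i) := by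
      intro i hi
      by_cases h1 : i = k
      · exact .inl h1
      by_cases h2 : i = bar k
      · exact .inr (.inl h2)
      refine .inr (.inr ⟨h1, h2, ?_⟩)
      have h3 : bar i ≠ k := fun h => h2 (by rw [← h, hbb])
      simpa [Finset.mem_insert, h1, h3, hA] using hi
    refine ⟨fun i => if i = k then x else if i = bar k then -x else ρ i, ?_, ?_⟩
    · intro i
      by_cases h1 : i = k
      · subst h1; simp [hkn]
      by_cases h2 : i = bar k
      · subst h2; simp [hbb, hkn]
      have h3 : bar i ≠ k := fun h => h2 (by rw [← h, hbb])
      have h4 : bar i ≠ bar k := fun h => h1 (by rw [← hbb i, h, hbb])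
      simp [h1, h2, h3, h4, hρ]
    · intro i j hi hj hT
      rcases hcase i hi with rfl | rfl | ⟨hi1, hi2, hi3⟩ <;>
      rcases hcase j hj with hj1 | hj1 | ⟨hj1, hj2, hj3⟩
      · subst hj1; simpa using diag _ hT
      · subst hj1; simpa [hkn] using e3 hT
      · simpa [hj1, hj2] using e2 j hj3 hT
      · subst hj1; simpa [hkn] using e4 hT
      · subst hj1; simpa [hkn] using diag _ hT
      · simpa [hj1, hj2, hkn] using e6 j hj3 hT
      · subst hj1; simpa [hi1, hi2] using e1 i hi3 hT
      · subst hj1; simpa [hi1, hi2, hkn] using e5 i hi3 hT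
      · simpa [hi1, hi2, hj1, hj2] using h i j hi3 hj3 hT

/-- An integer octagonal graph admitting a tightly closed integer
    octagonal graph below it is ℤ-consistent. -/
theorem dominating_tightly_closed_implies_Z_consistent
    {n : ℕ} (hn : 1 ≤ n) (w : Fin (2 * n) → Fin (2 * n) → Qinf)
    (hoct : Octagonal w) (hint : IntWeights w)
    (hex : ∃ w' : Fin (2 * n) → Fin (2 * n) → Qinf,
      TightlyClosed w' ∧ GLe w' w) :
    ∃ ρ : Fin (2 * n) → ℤ,
      (∀ i, ρ (bar i) = -ρ i) ∧
      ∀ i j, w i j < ⊤ → (((ρ i - ρ j : ℤ) : ℚ) : Qinf) ≤ w i j := by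
  obtain ⟨w', ⟨hI, ⟨⟨-, hcoh⟩, ⟨-, hdiag, htri⟩, -⟩, hev⟩, hle⟩ := hex
  have hex2 : ∀ i j, ∃ d : ℤ, w' i j ≠ ⊤ → w' i j = ((d : ℚ) : Qinf) := by
    intro i j
    rcases hI i j with h | ⟨d, h⟩
    · exact ⟨0, fun h' => (h' h).elim⟩
    · exact ⟨d, fun _ => h⟩
  choose f hf using hex2
  obtain ⟨ρ, hρ, h⟩ := my_extend (fun i j => w' i j ≠ ⊤) f
    (by
      intro i k j h1 h2
      have t := htri i j k
      have h3 : w' i j ≠ ⊤ := by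
        intro h3
        rw [h3, hf _ _ h1, hf _ _ h2, ← WithTop.coe_add, top_le_iff] at t
        exact WithTop.coe_ne_top t
      refine ⟨h3, ?_⟩
      rw [hf _ _ h1, hf _ _ h2, hf _ _ h3, ← WithTop.coe_add, WithTop.coe_le_coe] at t
      exact_mod_cast t)
    (by
      intro i j h1
      have h2 : w' (bar j) (bar i) ≠ ⊤ := by rw [← hcoh]; exact h1
      refine ⟨h2, ?_⟩
      have c := hcoh i j
      rw [hf _ _ h1, hf _ _ h2, WithTop.coe_inj] at c
      exact_mod_cast c.symm)
    (by
      intro i h1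
      rcases hev i with h | ⟨d, h⟩
      · exact (h1 h).elim
      · refine ⟨d, ?_⟩
        rw [hf _ _ h1, WithTop.coe_inj] at h
        exact_mod_cast h)
    (by
      intro i h1
      have h := hdiag i
      rw [hf _ _ h1, ← WithTop.coe_zero, WithTop.coe_inj] at h
      have : f i i = 0 := by exact_mod_cast h
      exact this.ge)
    Finset.univ
  refine ⟨ρ, hρ, fun i j hij => ?_⟩
  refine le_trans ?_ (hle i j)
  have h1 : w' i j ≠ ⊤ := ((hle i j).trans_lt hij).ne
  have := h i j (by simp) (by simp) h1
  rw [hf _ _ h1, WithTop.coe_le_coe]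
  exact_mod_cast this
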